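/- arXiv:2410.23270 — 2 statements merged into one kernel-verified Lean document; each statement's English description precedes it below -/
import Mathlib

section
/- Let G be a d-regular graph on n vertices with d ≥ 3, let I(G) denote the collection of independent sets of G, let λ ∈ (0,1], and define the hardcore partition function Z(λ) = Σ_{S ∈ I(G)} λ^{|S|} and Gibbs measure π_λ(S) = λ^{|S|}/Z(λ). Let S* be a maximum independent set of G, so |S*| = α(G), the independence number. Then π_λ(S*) ≥ λ^{α(G)} / (2(1+λ)^d − 1)^{n/(2d)}. In particular, if m ≥ α(G), then π_λ(S*) ≥ λ^{m} / (2(1+λ)^d − 1)^{n/(2d)}. -/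
open Finset

noncomputable section

/-!
This is the occupancy method of Davies, Jenssen, Perkins and Roberts. Since `λ Z'(λ) / Z(λ)` is the
expected size of a random independent set `I`, it suffices to bound this expectation and integrate
the logarithmic derivative of `Z` from fugacity `0`.

For a vertex `v` of degree `d`, the sets `I` disjoint from the neighbourhood `N` of `v` carry
`(1 + λ) / λ` times the weight of those containing `v`. Given that `I` meets `N`, the expected size
of `I ∩ N` is largest when every subset of `N` may occur: independent sets are closed under taking
subsets, so the normalized level weights of `I ∩ N` decrease with the level and Chebyshev's sum
inequality applies. Together these bound `d (1 + λ)^d P(v ∈ I) + ((1 + λ)^d - 1) E|I ∩ N|`; summing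
over `v` counts every element of `I` once in the first term and `d` times in the second.
-/

section Inequalities

theorem sum_mul_sum_mul_mul_le_of_antivaryOn {ι R : Type*} [CommRing R] [LinearOrder R]
    [IsStrictOrderedRing R] {s : Finset ι} {w f g : ι → R} (hfg : AntivaryOn f g s)
    (hw : ∀ i ∈ s, 0 ≤ w i) :
    (∑ i ∈ s, w i) * ∑ i ∈ s, w i * (f i * g i) ≤ (∑ i ∈ s, w i * f i) * ∑ i ∈ s, w i * g i := by
  have double_sum_nonpos : ∑ i ∈ s, ∑ j ∈ s, w i * w j * ((f j - f i) * (g j - g i)) ≤ 0 :=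
    sum_nonpos fun i hi => sum_nonpos fun j hj =>
      mul_nonpos_of_nonneg_of_nonpos (mul_nonneg (hw i hi) (hw j hj))
        (antivaryOn_iff_forall_mul_nonpos.1 hfg hi hj)
  have expand : ∑ i ∈ s, ∑ j ∈ s, w i * w j * ((f j - f i) * (g j - g i)) =
      (∑ i ∈ s, w i) * (∑ i ∈ s, w i * (f i * g i)) + (∑ i ∈ s, w i * (f i * g i)) * (∑ i ∈ s, w i)
        - (∑ i ∈ s, w i * f i) * (∑ i ∈ s, w i * g i)
        - (∑ i ∈ s, w i * g i) * (∑ i ∈ s, w i * f i) := by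
    simp only [sum_mul_sum, ← sum_add_distrib, ← sum_sub_distrib]
    exact sum_congr rfl fun i _ => sum_congr rfl fun j _ => by ring
  linarith

theorem sum_Ico_choose_mul_pow {R : Type*} [CommRing R] (n : ℕ) (x : R) :
    ∑ k ∈ Ico 1 (n + 1), n.choose k * x ^ k = (1 + x) ^ n - 1 := by
  have binomial := add_pow x 1 n
  rw [sum_range_eq_add_Ico _ n.succ_pos] at binomial
  simp only [one_pow, mul_one, pow_zero, Nat.choose_zero_right, Nat.cast_one] at binomial
  simp only [add_comm 1 x, binomial, add_sub_cancel_left, mul_comm]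

theorem sum_Ico_choose_mul_pow_mul_self {R : Type*} [CommSemiring R] (n : ℕ) (x : R) :
    ∑ k ∈ Ico 1 (n + 1), n.choose k * x ^ k * k = n * x * (1 + x) ^ (n - 1) := by
  cases n with
  | zero => simp
  | succ n =>
    rw [sum_Ico_eq_sum_range, Nat.add_sub_cancel, Nat.add_sub_cancel, add_comm 1 x, add_pow,
      mul_sum]
    refine sum_congr rfl fun k _ => ?_
    have absorb : ((n + 1 : ℕ) : R) * n.choose k = (n + 1).choose (k + 1) * (k + 1 : ℕ) :=
      mod_cast congrArg (Nat.cast : ℕ → R) (Nat.add_one_mul_choose_eq n k)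
    calc (n + 1).choose (1 + k) * x ^ (1 + k) * ((1 + k : ℕ) : R)
        = (n + 1).choose (k + 1) * (k + 1 : ℕ) * (x ^ k * x) := by
          rw [add_comm 1 k, pow_succ, mul_right_comm]
      _ = (n + 1 : ℕ) * n.choose k * (x ^ k * x) := by rw [absorb]
      _ = (n + 1 : ℕ) * x * (x ^ k * 1 ^ (n - k) * n.choose k) := by
          rw [one_pow]
          ring

theorem le_rpow_of_deriv_mul_le {F H F' H' : ℝ → ℝ} {a b c : ℝ} (hab : a ≤ b)
    (hFc : ContinuousOn F (Set.Icc a b)) (hHc : ContinuousOn H (Set.Icc a b))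
    (hF : ∀ t ∈ Set.Icc a b, 0 < F t) (hH : ∀ t ∈ Set.Icc a b, 0 < H t)
    (hF' : ∀ t ∈ Set.Ioo a b, HasDerivAt F (F' t) t)
    (hH' : ∀ t ∈ Set.Ioo a b, HasDerivAt H (H' t) t)
    (h : ∀ t ∈ Set.Ioo a b, F' t * H t ≤ c * H' t * F t) (ha : F a ≤ H a ^ c) :
    F b ≤ H b ^ c := by
  have hasDeriv : ∀ t ∈ Set.Ioo a b, HasDerivAt (fun t => c * Real.log (H t) - Real.log (F t))
      (c * (H' t / H t) - F' t / F t) t := fun t ht =>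
    (((hH' t ht).log (hH t (Set.Ioo_subset_Icc_self ht)).ne').const_mul c).sub
      ((hF' t ht).log (hF t (Set.Ioo_subset_Icc_self ht)).ne')
  have monotone : MonotoneOn (fun t => c * Real.log (H t) - Real.log (F t)) (Set.Icc a b) := by
    refine monotoneOn_of_hasDerivWithinAt_nonneg (convex_Icc a b) ?_
      (fun t ht => (hasDeriv t (by rwa [interior_Icc] at ht)).hasDerivWithinAt) fun t ht => ?_
    · exact ((hHc.log fun t ht => (hH t ht).ne').const_mul c).sub
        (hFc.log fun t ht => (hF t ht).ne')
    · rw [interior_Icc] at ht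
      have ht' := Set.Ioo_subset_Icc_self ht
      rw [sub_nonneg, ← mul_div_assoc, div_le_div_iff₀ (hF t ht') (hH t ht')]
      exact h t ht
  have ha_mem := Set.left_mem_Icc.2 hab
  have hb_mem := Set.right_mem_Icc.2 hab
  rw [← Real.log_le_log_iff (hF a ha_mem) (Real.rpow_pos_of_pos (hH a ha_mem) c),
    Real.log_rpow (hH a ha_mem)] at ha
  rw [← Real.log_le_log_iff (hF b hb_mem) (Real.rpow_pos_of_pos (hH b hb_mem) c),
    Real.log_rpow (hH b hb_mem)]
  linarith [monotone ha_mem hb_mem hab]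

end Inequalities

section SetFamily

variable {α : Type*} {ℱ : Finset (Finset α)} {x : ℝ}

theorem hasDerivAt_sum_pow_card (ℱ : Finset (Finset α)) (hx : x ≠ 0) :
    HasDerivAt (fun t : ℝ => ∑ S ∈ ℱ, t ^ #S) ((∑ S ∈ ℱ, (#S : ℝ) * x ^ #S) / x) x := by
  rw [sum_div]
  refine HasDerivAt.fun_sum fun S _ => (hasDerivAt_pow #S x).congr_deriv ?_
  rcases Nat.eq_zero_or_pos #S with hS | hS
  · simp [hS]
  · rw [← pow_sub_one_mul hS.ne', ← mul_assoc, mul_div_cancel_right₀ _ hx]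

variable [DecidableEq α]

/-- The total weight of the members of `ℱ` that meet `N` in exactly `k` elements, where each element
outside `N` contributes a factor `x`. The elements of `N` are left out, so that levels of `N` can be
compared; `levelWeight ℱ N x k * x ^ k` is the sum of `x ^ #S` over these members `S`. -/
def levelWeight (ℱ : Finset (Finset α)) (N : Finset α) (x : ℝ) (k : ℕ) : ℝ :=
  ∑ S ∈ ℱ with #(S ∩ N) = k, x ^ #(S \ N)

theorem levelWeight_nonneg (ℱ : Finset (Finset α)) (N : Finset α) (hx : 0 ≤ x) (k : ℕ) :
    0 ≤ levelWeight ℱ N x k :=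
  sum_nonneg fun _ _ => pow_nonneg hx _

theorem sum_inter_nonempty_eq_sum_levelWeight (ℱ : Finset (Finset α)) (N : Finset α) (x : ℝ)
    (φ : ℕ → ℝ) :
    ∑ S ∈ ℱ with (S ∩ N).Nonempty, φ #(S ∩ N) * x ^ #S =
      ∑ k ∈ Ico 1 (#N + 1), φ k * (levelWeight ℱ N x k * x ^ k) := by
  have maps_to : ∀ S ∈ {S ∈ ℱ | (S ∩ N).Nonempty}, #(S ∩ N) ∈ Ico 1 (#N + 1) :=
    fun S hS => mem_Ico.2 ⟨(mem_filter.1 hS).2.card_pos,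
      Nat.lt_succ_of_le (card_le_card inter_subset_right)⟩
  rw [← sum_fiberwise_of_maps_to maps_to]
  refine sum_congr rfl fun k hk => ?_
  have fiber_eq :
      {S ∈ {S ∈ ℱ | (S ∩ N).Nonempty} | #(S ∩ N) = k} = {S ∈ ℱ | #(S ∩ N) = k} := by
    rw [filter_filter]
    exact filter_congr fun S _ => and_iff_right_of_imp fun hS =>
      card_pos.1 (hS ▸ (mem_Ico.1 hk).1)
  rw [fiber_eq, levelWeight, sum_mul, mul_sum]
  refine sum_congr rfl fun S hS => ?_
  rw [← (mem_filter.1 hS).2, ← pow_add, card_sdiff_add_card_inter]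

theorem sum_pow_card_sdiff_mem_le_notMem (hℱ : IsLowerSet (ℱ : Set (Finset α))) {N : Finset α}
    {u : α} (hu : u ∈ N) (hx : 0 ≤ x) (k : ℕ) :
    ∑ S ∈ ℱ with #(S ∩ N) = k + 1 ∧ u ∈ S, x ^ #(S \ N) ≤
      ∑ S ∈ ℱ with #(S ∩ N) = k ∧ u ∉ S, x ^ #(S \ N) := by
  have erase_sdiff_eq (S : Finset α) : S.erase u \ N = S \ N := by
    rw [erase_sdiff_comm, erase_eq_of_notMem fun h => (mem_sdiff.1 h).2 hu]
  have erase_injOn : Set.InjOn (fun S : Finset α => S.erase u)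
      ({S ∈ ℱ | #(S ∩ N) = k + 1 ∧ u ∈ S} : Finset (Finset α)) :=
    (erase_injOn' u).mono fun S hS => (mem_filter.1 hS).2.2
  calc ∑ S ∈ ℱ with #(S ∩ N) = k + 1 ∧ u ∈ S, x ^ #(S \ N)
      = ∑ S ∈ {S ∈ ℱ | #(S ∩ N) = k + 1 ∧ u ∈ S}.image fun S => S.erase u, x ^ #(S \ N) := by
        rw [sum_image erase_injOn]
        simp only [erase_sdiff_eq]
    _ ≤ ∑ S ∈ ℱ with #(S ∩ N) = k ∧ u ∉ S, x ^ #(S \ N) := by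
        refine sum_le_sum_of_subset_of_nonneg (image_subset_iff.2 fun S hS => ?_)
          fun _ _ _ => pow_nonneg hx _
        obtain ⟨hSℱ, hSk, huS⟩ := mem_filter.1 hS
        refine mem_filter.2 ⟨hℱ (erase_subset u S) hSℱ, ?_, notMem_erase u S⟩
        rw [erase_inter, card_erase_of_mem (mem_inter.2 ⟨huS, hu⟩), hSk, Nat.add_sub_cancel]

theorem succ_mul_levelWeight_succ_le (hℱ : IsLowerSet (ℱ : Set (Finset α))) (N : Finset α)
    (hx : 0 ≤ x) (k : ℕ) :
    (k + 1) * levelWeight ℱ N x (k + 1) ≤ (#N - k) * levelWeight ℱ N x k :=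
  calc (k + 1) * levelWeight ℱ N x (k + 1)
      = ∑ S ∈ ℱ with #(S ∩ N) = k + 1, ∑ _ ∈ S ∩ N, x ^ #(S \ N) := by
        rw [levelWeight, mul_sum]
        refine sum_congr rfl fun S hS => ?_
        rw [sum_const, (mem_filter.1 hS).2, nsmul_eq_mul, Nat.cast_succ]
    _ = ∑ u ∈ N, ∑ S ∈ ℱ with #(S ∩ N) = k + 1 ∧ u ∈ S, x ^ #(S \ N) :=
        sum_comm' fun _ _ => by simp only [mem_filter, mem_inter]; tauto
    _ ≤ ∑ u ∈ N, ∑ S ∈ ℱ with #(S ∩ N) = k ∧ u ∉ S, x ^ #(S \ N) :=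
        sum_le_sum fun _ hu => sum_pow_card_sdiff_mem_le_notMem hℱ hu hx k
    _ = ∑ S ∈ ℱ with #(S ∩ N) = k, ∑ _ ∈ N \ S, x ^ #(S \ N) :=
        (sum_comm' fun _ _ => by simp only [mem_filter, mem_sdiff]; tauto).symm
    _ = (#N - k) * levelWeight ℱ N x k := by
        rw [levelWeight, mul_sum]
        refine sum_congr rfl fun S hS => ?_
        rw [sum_const, nsmul_eq_mul, ← (mem_filter.1 hS).2, inter_comm,
          ← card_sdiff_add_card_inter N S, Nat.cast_add, add_sub_cancel_right]

-- For `k > #N` the quotient is `0 / 0 = 0`.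
theorem antitone_levelWeight_div_choose (hℱ : IsLowerSet (ℱ : Set (Finset α))) (N : Finset α)
    (hx : 0 ≤ x) : Antitone fun k => levelWeight ℱ N x k / (#N).choose k := by
  refine antitone_nat_of_succ_le fun k => ?_
  rcases lt_or_ge k #N with hk | hk
  · have hpos : ∀ {j}, j ≤ #N → (0 : ℝ) < (#N).choose j := fun hj => mod_cast Nat.choose_pos hj
    have choose_succ : ((#N).choose (k + 1) : ℝ) * (k + 1) = (#N).choose k * (#N - k) := by
      rw [← Nat.cast_sub hk.le]
      exact mod_cast Nat.choose_succ_right_eq #N k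
    rw [div_le_div_iff₀ (hpos hk) (hpos hk.le)]
    refine le_of_mul_le_mul_right ?_ (Nat.cast_add_one_pos (α := ℝ) k)
    calc levelWeight ℱ N x (k + 1) * (#N).choose k * (k + 1)
        = (k + 1) * levelWeight ℱ N x (k + 1) * (#N).choose k := by ring
      _ ≤ (#N - k) * levelWeight ℱ N x k * (#N).choose k :=
        mul_le_mul_of_nonneg_right (succ_mul_levelWeight_succ_le hℱ N hx k)
          (Nat.cast_nonneg _)
      _ = levelWeight ℱ N x k * (#N).choose (k + 1) * (k + 1) := by
        linear_combination -levelWeight ℱ N x k * choose_succ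
  · rw [Nat.choose_eq_zero_of_lt (Nat.lt_succ_of_le hk), Nat.cast_zero, div_zero]
    exact div_nonneg (levelWeight_nonneg ℱ N hx k) (Nat.cast_nonneg _)

theorem sum_card_inter_mul_le_of_isLowerSet (hℱ : IsLowerSet (ℱ : Set (Finset α))) (N : Finset α)
    (hx : 0 ≤ x) :
    ((1 + x) ^ #N - 1) * ∑ S ∈ ℱ, (#(S ∩ N) : ℝ) * x ^ #S ≤
      #N * x * (1 + x) ^ (#N - 1) * ∑ S ∈ ℱ with (S ∩ N).Nonempty, x ^ #S := by
  have sum_level : ∀ φ : ℕ → ℝ,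
      ∑ k ∈ Ico 1 (#N + 1), (#N).choose k * x ^ k * (φ k * (levelWeight ℱ N x k / (#N).choose k))
        = ∑ S ∈ ℱ with (S ∩ N).Nonempty, φ #(S ∩ N) * x ^ #S := by
    intro φ
    rw [sum_inter_nonempty_eq_sum_levelWeight]
    refine sum_congr rfl fun k hk => ?_
    have choose_ne_zero : ((#N).choose k : ℝ) ≠ 0 :=
      mod_cast (Nat.choose_pos (Nat.le_of_lt_succ (mem_Ico.1 hk).2)).ne'
    field_simp
  have chebyshev := sum_mul_sum_mul_mul_le_of_antivaryOn (s := Ico 1 (#N + 1))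
    (w := fun k => (#N).choose k * x ^ k) (f := fun k => (k : ℝ))
    ((Nat.mono_cast.antivary (antitone_levelWeight_div_choose hℱ N hx)).antivaryOn _)
    fun k _ => mul_nonneg (Nat.cast_nonneg _) (pow_nonneg hx k)
  have sum_weight := sum_level 1
  simp only [Pi.one_apply, one_mul] at sum_weight
  have sum_inter : ∑ S ∈ ℱ with (S ∩ N).Nonempty, (#(S ∩ N) : ℝ) * x ^ #S =
      ∑ S ∈ ℱ, (#(S ∩ N) : ℝ) * x ^ #S :=
    sum_filter_of_ne fun S _ hS => card_ne_zero.1 fun h => hS (by rw [h, Nat.cast_zero, zero_mul])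
  rwa [sum_Ico_choose_mul_pow, sum_level Nat.cast, sum_Ico_choose_mul_pow_mul_self, sum_weight,
    sum_inter] at chebyshev

theorem sum_sum_mem_eq_sum_card_mul [Fintype α] (ℱ : Finset (Finset α)) (w : Finset α → ℝ) :
    ∑ v, ∑ S ∈ ℱ with v ∈ S, w S = ∑ S ∈ ℱ, (#S : ℝ) * w S := by
  rw [sum_comm' (t' := ℱ) (s' := fun S => S) (by simp [and_comm])]
  simp only [sum_const, nsmul_eq_mul]

end SetFamily

section Graph

variable {V : Type*} [Fintype V] [DecidableEq V] (G : SimpleGraph V) [DecidableRel G.Adj]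

/-- The collection `I(G)` of the independent sets of `G`. -/
def indepSets : Finset (Finset V) := {S | G.IsIndepSet S}

/-- The hardcore partition function `Z(x)` of `G` at fugacity `x`. -/
def hardcorePartition (x : ℝ) : ℝ := ∑ S ∈ indepSets G, x ^ #S

/-- The hardcore Gibbs measure `π_x(S)` of a vertex set `S` at fugacity `x`, extended by `0` to the
sets that are not independent. -/
def hardcoreMeasure (x : ℝ) (S : Finset V) : ℝ :=
  if S ∈ indepSets G then x ^ #S / hardcorePartition G x else 0

variable {G} {x : ℝ}

theorem mem_indepSets {S : Finset V} : S ∈ indepSets G ↔ ∀ u ∈ S, ∀ v ∈ S, ¬G.Adj u v := by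
  simp only [indepSets, mem_filter_univ, SimpleGraph.isIndepSet_iff, Set.Pairwise, mem_coe]
  exact ⟨fun h u hu v hv huv => h hu hv huv.ne huv, fun h u hu v hv _ => h u hu v hv⟩

variable (G) in
theorem indepSets_eq_filter [DecidablePred fun S : Finset V => ∀ u ∈ S, ∀ v ∈ S, ¬G.Adj u v] :
    indepSets G = univ.filter fun S : Finset V => ∀ u ∈ S, ∀ v ∈ S, ¬G.Adj u v := by
  ext S
  rw [mem_indepSets, mem_filter_univ]

theorem empty_mem_indepSets : ∅ ∈ indepSets G := by
  simp [mem_indepSets]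

variable (G) in
theorem isLowerSet_indepSets : IsLowerSet (indepSets G : Set (Finset V)) := fun _ _ hST hS =>
  mem_indepSets.2 fun u hu v hv => mem_indepSets.1 hS u (hST hu) v (hST hv)

theorem insert_mem_indepSets_iff {v : V} {S : Finset V} :
    insert v S ∈ indepSets G ↔ S ∈ indepSets G ∧ Disjoint S (G.neighborFinset v) := by
  simp only [mem_indepSets, disjoint_left, SimpleGraph.mem_neighborFinset]
  constructor
  · exact fun h => ⟨fun a ha b hb => h a (mem_insert_of_mem ha) b (mem_insert_of_mem hb),
      fun a ha => h v (mem_insert_self v S) a (mem_insert_of_mem ha)⟩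
  · rintro ⟨hS, hv⟩ a ha b hb hab
    rcases mem_insert.1 ha with hav | ha <;> rcases mem_insert.1 hb with hbv | hb
    · exact hab.ne (hav.trans hbv.symm)
    · exact hv hb (hav ▸ hab)
    · exact hv ha (hbv ▸ hab.symm)
    · exact hS a ha b hb hab

theorem hardcoreMeasure_of_mem {S : Finset V} (hS : S ∈ indepSets G) :
    hardcoreMeasure G x S = x ^ #S / hardcorePartition G x :=
  if_pos hS

theorem hardcorePartition_pos (hx : 0 ≤ x) : 0 < hardcorePartition G x :=
  sum_pos' (fun _ _ => pow_nonneg hx _) ⟨∅, empty_mem_indepSets, by simp⟩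

theorem hardcorePartition_zero : hardcorePartition G 0 = 1 := by
  rw [hardcorePartition, sum_eq_single_of_mem ∅ empty_mem_indepSets, card_empty, pow_zero]
  exact fun S _ hS => zero_pow (card_ne_zero.2 (nonempty_iff_ne_empty.2 hS))

variable (G) in
theorem mul_sum_disjoint_neighborFinset_eq (v : V) (x : ℝ) :
    x * ∑ S ∈ indepSets G with Disjoint S (G.neighborFinset v), x ^ #S =
      (1 + x) * ∑ S ∈ indepSets G with v ∈ S, x ^ #S := by
  have sum_mem : ∑ S ∈ indepSets G with Disjoint S (G.neighborFinset v) ∧ v ∈ S, x ^ #S =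
      ∑ S ∈ indepSets G with v ∈ S, x ^ #S := by
    congr 1
    refine filter_congr fun S hS => and_iff_right_of_imp fun hv => ?_
    rw [← insert_eq_self.2 hv] at hS
    exact (insert_mem_indepSets_iff.1 hS).2
  have sum_notMem :
      x * ∑ S ∈ indepSets G with Disjoint S (G.neighborFinset v) ∧ v ∉ S, x ^ #S =
        ∑ S ∈ indepSets G with v ∈ S, x ^ #S := by
    rw [mul_sum]
    refine sum_bij' (fun S _ => insert v S) (fun S _ => S.erase v) ?_ ?_ ?_ ?_ ?_ <;>
      intro S hS <;> rw [mem_filter] at hS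
    · exact mem_filter.2 ⟨insert_mem_indepSets_iff.2 ⟨hS.1, hS.2.1⟩, mem_insert_self v S⟩
    · rw [← insert_erase hS.2, insert_mem_indepSets_iff] at hS
      exact mem_filter.2 ⟨hS.1.1, hS.1.2, notMem_erase v S⟩
    · exact erase_insert hS.2.2
    · exact insert_erase hS.2
    · rw [card_insert_of_notMem hS.2.2, pow_succ']
  rw [← sum_filter_add_sum_filter_not _ (fun S => v ∈ S), filter_filter, filter_filter, mul_add,
    sum_mem, sum_notMem]
  ring

variable (G) in
theorem sum_mem_add_sum_card_inter_neighborFinset_le (v : V) (hx : 0 ≤ x) :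
    G.degree v * (1 + x) ^ G.degree v * ∑ S ∈ indepSets G with v ∈ S, x ^ #S
      + ((1 + x) ^ G.degree v - 1) * ∑ S ∈ indepSets G, (#(S ∩ G.neighborFinset v) : ℝ) * x ^ #S
    ≤ G.degree v * x * (1 + x) ^ (G.degree v - 1) * hardcorePartition G x := by
  have occupied : G.degree v * (1 + x) ^ G.degree v * ∑ S ∈ indepSets G with v ∈ S, x ^ #S =
      G.degree v * x * (1 + x) ^ (G.degree v - 1) *
        ∑ S ∈ indepSets G with Disjoint S (G.neighborFinset v), x ^ #S := by
    have pow_degree : G.degree v * (1 + x) ^ G.degree v =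
        G.degree v * ((1 + x) ^ (G.degree v - 1) * (1 + x)) := by
      rcases Nat.eq_zero_or_pos (G.degree v) with h | h
      · rw [h, Nat.cast_zero, zero_mul, zero_mul]
      · rw [pow_sub_one_mul h.ne']
    linear_combination (∑ S ∈ indepSets G with v ∈ S, x ^ #S) * pow_degree -
      G.degree v * (1 + x) ^ (G.degree v - 1) * mul_sum_disjoint_neighborFinset_eq G v x
  have neighbors := sum_card_inter_mul_le_of_isLowerSet (isLowerSet_indepSets G)
    (G.neighborFinset v) hx
  rw [SimpleGraph.card_neighborFinset_eq_degree] at neighbors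
  have partition_split : hardcorePartition G x =
      ∑ S ∈ indepSets G with Disjoint S (G.neighborFinset v), x ^ #S +
        ∑ S ∈ indepSets G with (S ∩ G.neighborFinset v).Nonempty, x ^ #S := by
    simp only [← not_disjoint_iff_nonempty_inter]
    exact (sum_filter_add_sum_filter_not _ _ _).symm
  rw [partition_split, mul_add]
  exact add_le_add occupied.le neighbors

variable (G) in
theorem sum_card_inter_neighborFinset (S : Finset V) :
    ∑ v, #(S ∩ G.neighborFinset v) = ∑ u ∈ S, G.degree u := by
  calc ∑ v, #(S ∩ G.neighborFinset v) = ∑ v, #(bipartiteBelow G.Adj S v) := by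
        congr! 3 with v
        ext u
        simp [G.adj_comm]
    _ = ∑ u ∈ S, #(bipartiteAbove G.Adj univ u) :=
        (sum_card_bipartiteAbove_eq_sum_card_bipartiteBelow _).symm
    _ = ∑ u ∈ S, G.degree u := by
        congr! 2 with u
        rw [← G.card_neighborFinset_eq_degree, G.neighborFinset_eq_filter, bipartiteAbove]

theorem sum_card_mul_le_of_isRegularOfDegree {d : ℕ} (hd : d ≠ 0) (hreg : G.IsRegularOfDegree d)
    (hx : 0 ≤ x) :
    (2 * (1 + x) ^ d - 1) * ∑ S ∈ indepSets G, (#S : ℝ) * x ^ #S ≤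
      Fintype.card V * x * (1 + x) ^ (d - 1) * hardcorePartition G x := by
  have sum_neighbors :
      ∑ v, ∑ S ∈ indepSets G, (#(S ∩ G.neighborFinset v) : ℝ) * x ^ #S =
        d * ∑ S ∈ indepSets G, (#S : ℝ) * x ^ #S := by
    rw [sum_comm, mul_sum]
    refine sum_congr rfl fun S _ => ?_
    rw [← sum_mul, ← Nat.cast_sum, sum_card_inter_neighborFinset, sum_congr rfl fun u _ => hreg u,
      sum_const, smul_eq_mul, Nat.cast_mul, mul_comm (#S : ℝ), mul_assoc]
  have sum_local := sum_le_sum fun v (_ : v ∈ univ) =>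
    sum_mem_add_sum_card_inter_neighborFinset_le G v hx
  simp only [hreg.degree_eq] at sum_local
  rw [sum_add_distrib, ← mul_sum, ← mul_sum, sum_sum_mem_eq_sum_card_mul, sum_neighbors, sum_const,
    card_univ, nsmul_eq_mul] at sum_local
  refine le_of_mul_le_mul_left ?_ (Nat.cast_pos.2 (Nat.pos_of_ne_zero hd) : (0 : ℝ) < d)
  linarith

theorem hardcorePartition_le_of_isRegularOfDegree {d : ℕ} (hd : d ≠ 0)
    (hreg : G.IsRegularOfDegree d) (hx : 0 ≤ x) :
    hardcorePartition G x ≤ (2 * (1 + x) ^ d - 1) ^ ((Fintype.card V : ℝ) / (2 * d)) := by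
  have hasDeriv (t : ℝ) :
      HasDerivAt (fun t : ℝ => 2 * (1 + t) ^ d - 1) (2 * (d * (1 + t) ^ (d - 1))) t := by
    simpa using ((((hasDerivAt_id t).const_add 1).pow d).const_mul 2).sub_const 1
  refine le_rpow_of_deriv_mul_le hx (by unfold hardcorePartition; fun_prop) (by fun_prop)
    (fun t ht => hardcorePartition_pos ht.1)
    (fun t ht => by linarith [one_le_pow₀ (le_add_of_nonneg_right ht.1 : 1 ≤ 1 + t) (n := d)])
    (fun t ht => hasDerivAt_sum_pow_card (indepSets G) ht.1.ne') (fun t _ => hasDeriv t)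
    (fun t ht => ?_) ?_
  · have occupancy := sum_card_mul_le_of_isRegularOfDegree hd hreg ht.1.le
    have hd' : (d : ℝ) ≠ 0 := Nat.cast_ne_zero.2 hd
    rw [div_mul_eq_mul_div, div_le_iff₀ ht.1]
    field_simp
    linarith
  · norm_num [hardcorePartition_zero]

end Graph

theorem stmt_16_general {V : Type*} [Fintype V] [DecidableEq V] {G : SimpleGraph V}
    [DecidableRel G.Adj] {d : ℕ} (hd : d ≠ 0) (hreg : G.IsRegularOfDegree d) {lam : ℝ}
    (hlam : 0 ≤ lam) {S : Finset V} (hS : S ∈ indepSets G) :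
    lam ^ #S / (2 * (1 + lam) ^ d - 1) ^ ((Fintype.card V : ℝ) / (2 * d)) ≤
        hardcoreMeasure G lam S ∧
      (lam ≤ 1 → ∀ m : ℕ, #S ≤ m →
        lam ^ m / (2 * (1 + lam) ^ d - 1) ^ ((Fintype.card V : ℝ) / (2 * d)) ≤
          hardcoreMeasure G lam S) := by
  have partition_le := hardcorePartition_le_of_isRegularOfDegree hd hreg hlam
  have partition_pos := hardcorePartition_pos (G := G) hlam
  rw [hardcoreMeasure_of_mem hS]
  exact ⟨div_le_div_of_nonneg_left (pow_nonneg hlam _) partition_pos partition_le,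
    fun hlam_le m hm => div_le_div₀ (pow_nonneg hlam _) (pow_le_pow_of_le_one hlam hlam_le hm)
      partition_pos partition_le⟩

/-- for a `d`-regular graph `G` on `n` vertices (`d ≥ 3`), fugacity
`λ ∈ (0,1]`, hardcore partition function `Z(λ) = Σ_{S independent} λ^{|S|}` and a
maximum independent set `S*` (so `|S*| = α(G)`), the Gibbs measure satisfies
`π_λ(S*) = λ^{α(G)}/Z ≥ λ^{α(G)}/(2(1+λ)^d - 1)^{n/(2d)}`, and for any `m ≥ α(G)`,
`π_λ(S*) ≥ λ^m/(2(1+λ)^d - 1)^{n/(2d)}`. -/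
theorem stmt_16 {n : ℕ} (d : ℕ) (hd : 3 ≤ d) (G : SimpleGraph (Fin n))
    [DecidableRel G.Adj] (hreg : G.IsRegularOfDegree d)
    (lam : ℝ) (hlam : lam ∈ Set.Ioc (0:ℝ) 1)
    (Sstar : Finset (Fin n)) (hind : ∀ u ∈ Sstar, ∀ v ∈ Sstar, ¬G.Adj u v)
    (hmax : ∀ S : Finset (Fin n), (∀ u ∈ S, ∀ v ∈ S, ¬G.Adj u v) → S.card ≤ Sstar.card) :
    lam ^ Sstar.card /
        (∑ S ∈ univ.filter (fun S : Finset (Fin n) => ∀ u ∈ S, ∀ v ∈ S, ¬G.Adj u v),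
          lam ^ S.card)
      ≥ lam ^ Sstar.card / (2 * (1 + lam) ^ d - 1) ^ ((n : ℝ) / (2 * (d : ℝ))) ∧
    ∀ m : ℕ, Sstar.card ≤ m →
      lam ^ Sstar.card /
          (∑ S ∈ univ.filter (fun S : Finset (Fin n) => ∀ u ∈ S, ∀ v ∈ S, ¬G.Adj u v),
            lam ^ S.card)
        ≥ lam ^ m / (2 * (1 + lam) ^ d - 1) ^ ((n : ℝ) / (2 * (d : ℝ))) := by
  have bounds := stmt_16_general (by lia) hreg hlam.1.le (mem_indepSets.2 hind)
  rw [hardcoreMeasure_of_mem (mem_indepSets.2 hind), hardcorePartition, indepSets_eq_filter,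
    Fintype.card_fin] at bounds
  exact ⟨bounds.1, bounds.2 hlam.2⟩
end
end

section
/- Let H : {0,1}^n → ℝ with minimum E* = min_x H(x) < 0, and let β > 0, η ∈ (0,1), γ ∈ (0,1). Suppose the number of strings x with H(x) ≤ (1−η)E* is at most 2^{(1−γ)n}. Let π_β(x) = exp(−β·H(x))/Z(β) with Z(β) = Σ_x exp(−β·H(x)) be the Gibbs distribution at inverse temperature β. Then the probability under π_β of the set of global minimizers satisfies π_β({x : H(x) = E*}) ≥ 2^{−n} / ( exp(−β·η·|E*|) + 2^{−γn} ). -/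
open Finset
open scoped Classical

/-!
Every state of energy above `E + δ` weighs at most `exp (-β * δ)` times as much as a ground state,
and the others, which are few, weigh at most as much as a ground state. Summing over the states
bounds the partition function, and comparing with the weight of the ground states gives the result.
-/

lemma sum_exp_neg_mul_le_card_mul {Ω : Type*} {H : Ω → ℝ} {β E : ℝ} {s : Finset Ω}
    (hβ : 0 ≤ β) (hE : ∀ x ∈ s, E ≤ H x) :
    ∑ x ∈ s, Real.exp (-β * H x) ≤ #s * Real.exp (-β * E) := by
  rw [← nsmul_eq_mul]
  refine sum_le_card_nsmul _ _ _ fun x hx => Real.exp_le_exp.mpr ?_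
  exact mul_le_mul_of_nonpos_left (hE x hx) (neg_nonpos.mpr hβ)

section Gibbs

variable {Ω : Type*} [Fintype Ω]

/-- The partition function `Z(β) = ∑ x, exp (-β H(x))` of the energy function `H`, the normalising
constant of its Gibbs distribution. -/
noncomputable def partitionFunction (H : Ω → ℝ) (β : ℝ) : ℝ :=
  ∑ x, Real.exp (-β * H x)

/-- The probability of the event `s` under the Gibbs distribution of `H` at inverse temperature
`β`, with events encoded as finite sets of states. -/
noncomputable def gibbsProb (H : Ω → ℝ) (β : ℝ) (s : Finset Ω) : ℝ :=
  (∑ x ∈ s, Real.exp (-β * H x)) / partitionFunction H β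

lemma partitionFunction_pos [Nonempty Ω] (H : Ω → ℝ) (β : ℝ) : 0 < partitionFunction H β :=
  sum_pos (fun _ _ => Real.exp_pos _) univ_nonempty

variable {H : Ω → ℝ} {β E : ℝ}

lemma sum_exp_neg_mul_filter_eq :
    ∑ x with H x = E, Real.exp (-β * H x) = #{x | H x = E} * Real.exp (-β * E) := by
  rw [← nsmul_eq_mul]
  exact sum_eq_card_nsmul fun x hx => by rw [(mem_filter.mp hx).2]

lemma partitionFunction_le_of_forall_le (hβ : 0 ≤ β) (hE : ∀ x, E ≤ H x) (δ : ℝ) :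
    partitionFunction H β ≤ Fintype.card Ω * Real.exp (-β * E) *
      (Real.exp (-β * δ) + (dens {x | H x ≤ E + δ} : ℝ)) := by
  have hlow : ∑ x with H x ≤ E + δ, Real.exp (-β * H x) ≤
      #{x | H x ≤ E + δ} * Real.exp (-β * E) :=
    sum_exp_neg_mul_le_card_mul hβ fun x _ => hE x
  have hhigh : ∑ x with ¬H x ≤ E + δ, Real.exp (-β * H x) ≤
      Fintype.card Ω * Real.exp (-β * (E + δ)) :=
    calc
      _ ≤ #{x | ¬H x ≤ E + δ} * Real.exp (-β * (E + δ)) :=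
        sum_exp_neg_mul_le_card_mul hβ fun x hx => (not_le.mp (mem_filter.mp hx).2).le
      _ ≤ _ := by gcongr; exact card_le_univ _
  have hcard : (#{x | H x ≤ E + δ} : ℝ) =
      Fintype.card Ω * (dens {x | H x ≤ E + δ} : ℝ) :=
    (natCast_card_mul_nnratCast_dens _).symm
  calc
    partitionFunction H β = ∑ x with H x ≤ E + δ, Real.exp (-β * H x) +
        ∑ x with ¬H x ≤ E + δ, Real.exp (-β * H x) :=
      (sum_filter_add_sum_filter_not _ _ _).symm
    _ ≤ #{x | H x ≤ E + δ} * Real.exp (-β * E) +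
        Fintype.card Ω * Real.exp (-β * (E + δ)) := add_le_add hlow hhigh
    _ = _ := by rw [hcard, mul_add (-β), Real.exp_add]; ring

theorem stmt_17_general (hE : IsLeast (Set.range H) E) (hβ : 0 ≤ β) (δ : ℝ) :
    (dens {x | H x = E} : ℝ) / (Real.exp (-β * δ) + (dens {x | H x ≤ E + δ} : ℝ)) ≤
      gibbsProb H β {x | H x = E} := by
  obtain ⟨⟨x₀, -⟩, hlower⟩ := hE
  have : Nonempty Ω := ⟨x₀⟩
  have hZ := partitionFunction_le_of_forall_le hβ (fun x => hlower ⟨x, rfl⟩) δ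
  calc
    _ = #{x | H x = E} * Real.exp (-β * E) / (Fintype.card Ω * Real.exp (-β * E) *
          (Real.exp (-β * δ) + (dens {x | H x ≤ E + δ} : ℝ))) := by
      rw [nnratCast_dens {x | H x = E}]; field_simp
    _ ≤ #{x | H x = E} * Real.exp (-β * E) / partitionFunction H β :=
      div_le_div_of_nonneg_left (by positivity) (partitionFunction_pos H β) hZ
    _ = gibbsProb H β {x | H x = E} := by rw [gibbsProb, sum_exp_neg_mul_filter_eq]

end Gibbs

section Hypercube

variable {n : ℕ} {s : Finset (Fin n → Bool)}

lemma dens_hypercube_eq_card_mul :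
    (s.dens : ℝ) = #s * (2 : ℝ) ^ (-(n : ℝ)) := by
  simp [nnratCast_dens, Real.rpow_neg, div_eq_mul_inv]

lemma two_rpow_neg_le_dens_hypercube (hs : s.Nonempty) :
    (2 : ℝ) ^ (-(n : ℝ)) ≤ (s.dens : ℝ) := by
  rw [dens_hypercube_eq_card_mul]
  exact le_mul_of_one_le_left (by positivity) (mod_cast hs.card_pos)

lemma dens_hypercube_le_two_rpow {γ : ℝ} (hs : (#s : ℝ) ≤ (2 : ℝ) ^ ((1 - γ) * (n : ℝ))) :
    (s.dens : ℝ) ≤ (2 : ℝ) ^ (-γ * (n : ℝ)) :=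
  calc
    (s.dens : ℝ) = #s * (2 : ℝ) ^ (-(n : ℝ)) := dens_hypercube_eq_card_mul
    _ ≤ (2 : ℝ) ^ ((1 - γ) * (n : ℝ)) * (2 : ℝ) ^ (-(n : ℝ)) := by gcongr
    _ = (2 : ℝ) ^ (-γ * (n : ℝ)) := by rw [← Real.rpow_add two_pos]; ring_nf

end Hypercube

/-- Gibbs mass of the ground states. If the number of strings with
`H(x) ≤ (1-η)E*` is at most `2^{(1-γ)n}`, then the Gibbs distribution at inverse
temperature `β` gives the set of global minimisers mass at least
`2^{-n}/(exp(-βη|E*|) + 2^{-γn})`. -/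
theorem stmt_17 (n : ℕ) (H : (Fin n → Bool) → ℝ) (Estar : ℝ)
    (hmin : IsLeast (Set.range H) Estar) (hEstar : Estar < 0)
    (β η γ : ℝ) (hβ : 0 < β) (hη : η ∈ Set.Ioo (0:ℝ) 1) (hγ : γ ∈ Set.Ioo (0:ℝ) 1)
    (hcount : (((univ : Finset (Fin n → Bool)).filter fun x =>
        H x ≤ (1 - η) * Estar).card : ℝ) ≤ (2 : ℝ) ^ ((1 - γ) * (n : ℝ))) :
    (2 : ℝ) ^ (-(n : ℝ)) / (Real.exp (-β * η * |Estar|) + (2 : ℝ) ^ (-γ * (n : ℝ)))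
      ≤ (∑ x ∈ (univ : Finset (Fin n → Bool)).filter fun x => H x = Estar,
            Real.exp (-β * H x)) /
          ∑ x : Fin n → Bool, Real.exp (-β * H x) := by
  have hgap : (1 - η) * Estar = Estar + η * |Estar| := by rw [abs_of_neg hEstar]; ring
  obtain ⟨x₀, hx₀⟩ := hmin.1
  have hground := two_rpow_neg_le_dens_hypercube (s := {x | H x = Estar}) ⟨x₀, by simp [hx₀]⟩
  have hlow := dens_hypercube_le_two_rpow hcount
  rw [hgap] at hlow
  rw [mul_assoc (-β)]
  calc
    _ ≤ (dens {x | H x = Estar} : ℝ) / (Real.exp (-β * (η * |Estar|)) +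
          (dens {x | H x ≤ Estar + η * |Estar|} : ℝ)) := by gcongr
    _ ≤ gibbsProb H β {x | H x = Estar} := stmt_17_general hmin hβ.le _
end
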